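/- Let (x,y) ∈ [-1,1] × [-1,1] with x ≠ 0 and y ≠ 0, and define the 3-Squircular square-to-disc images u = (sgn(x·y)/y) · √((−1 + √(1 + 4x²y²(x² + y²)))/(2(x² + y²))) and v = (sgn(x·y)/x) · √((−1 + √(1 + 4x²y²(x² + y²)))/(2(x² + y²))). Then u² + v² > 0, 1 − 4u²v²(u² + v²) ≥ 0, and the 3-Squircular disc-to-square formulas recover (x,y): (sgn(u·v)/v) · √((1 − √(1 − 4u²v²(u² + v²)))/(2(u² + v²))) = x and (sgn(u·v)/u) · √((1 − √(1 − 4u²v²(u² + v²)))/(2(u² + v²))) = y. -/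

import Mathlib

/-!
Write `F(x, y) = x²y²(x² + y²)` and `k` for the ratio `u / x = v / y`. The squircular continuum
condition, with `t² = u² + v²`, becomes `F(x, y) k⁴ + k² = 1`, whose positive solution is
`k = σ(F(x, y))`, where `σ(p) = √(2 / (1 + √(1 + 4p)))` is the rationalised quadratic formula. The
inverse formulas are, in the same way, multiplication by `σ(-F(u, v))`. Since `F` is homogeneous of
degree 6, `1 - 4F(u, v) = 1 - 4k⁶F(x, y) = (2k² - 1)²`, so `σ(-F(u, v)) = 1 / k` as soon as
`2k² ≥ 1`, that is, `F(x, y) ≤ 2`.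
-/

/-- The sextic form `x²y²(x² + y²)` on which the radial scaling of the 3-Squircular mapping depends,
both in square and in disc coordinates. -/
def squircularForm (x y : ℝ) : ℝ := x ^ 2 * y ^ 2 * (x ^ 2 + y ^ 2)

/-- The radial scale factor of the 3-Squircular mapping: at a value `p` of `squircularForm`, the
square-to-disc map multiplies by `squircularScale p` and the disc-to-square map by
`squircularScale (-p)`. It is the root `√((-1 + √(1 + 4p)) / (2p))` of `p k⁴ + k² = 1`, rationalised
so as to make sense at `p = 0` too. -/
noncomputable def squircularScale (p : ℝ) : ℝ := √(2 / (1 + √(1 + 4 * p)))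

theorem squircularForm_nonneg (x y : ℝ) : 0 ≤ squircularForm x y := by
  unfold squircularForm
  positivity

theorem squircularForm_mul_mul (k x y : ℝ) :
    squircularForm (k * x) (k * y) = k ^ 6 * squircularForm x y := by
  unfold squircularForm
  ring

theorem squircularForm_le_two {x y : ℝ} (hx : x ∈ Set.Icc (-1 : ℝ) 1)
    (hy : y ∈ Set.Icc (-1 : ℝ) 1) : squircularForm x y ≤ 2 := by
  have hx2 : x ^ 2 ≤ 1 := (sq_le_one_iff_abs_le_one x).2 (abs_le.2 hx)
  have hy2 : y ^ 2 ≤ 1 := (sq_le_one_iff_abs_le_one y).2 (abs_le.2 hy)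
  calc x ^ 2 * y ^ 2 * (x ^ 2 + y ^ 2) ≤ 1 * 1 * (1 + 1) := by gcongr
    _ = 2 := by norm_num

theorem squircularScale_pos (p : ℝ) : 0 < squircularScale p := by
  unfold squircularScale
  positivity

theorem squircularScale_sq (p : ℝ) : squircularScale p ^ 2 = 2 / (1 + √(1 + 4 * p)) :=
  Real.sq_sqrt (by positivity)

theorem mul_squircularScale_pow_four_add_sq {p : ℝ} (hp : 0 ≤ 1 + 4 * p) :
    p * squircularScale p ^ 4 + squircularScale p ^ 2 = 1 := by
  have hroot : √(1 + 4 * p) ^ 2 = 1 + 4 * p := Real.sq_sqrt hp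
  have hpos : 0 < 1 + √(1 + 4 * p) := by positivity
  rw [show squircularScale p ^ 4 = (squircularScale p ^ 2) ^ 2 by ring, squircularScale_sq]
  generalize √(1 + 4 * p) = r at hroot hpos ⊢
  field_simp
  linear_combination -hroot

theorem one_sub_four_mul_squircularScale_pow_six_mul {p : ℝ} (hp : 0 ≤ 1 + 4 * p) :
    1 - 4 * (squircularScale p ^ 6 * p) = (2 * squircularScale p ^ 2 - 1) ^ 2 := by
  linear_combination
    (-4 * squircularScale p ^ 2) * mul_squircularScale_pow_four_add_sq hp

theorem one_le_two_mul_squircularScale_sq {p : ℝ} (hp : p ≤ 2) :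
    1 ≤ 2 * squircularScale p ^ 2 := by
  have hroot : √(1 + 4 * p) ≤ 3 := Real.sqrt_le_iff.2 ⟨by norm_num, by linarith⟩
  rw [squircularScale_sq, ← mul_div_assoc, one_le_div (by positivity)]
  linarith

theorem squircularScale_neg_pow_six_mul {p : ℝ} (hp₀ : 0 ≤ 1 + 4 * p) (hp₂ : p ≤ 2) :
    squircularScale (-(squircularScale p ^ 6 * p)) = (squircularScale p)⁻¹ := by
  set k := squircularScale p
  have hk_pos : 0 < k := squircularScale_pos p
  have hroot : √(1 + 4 * -(k ^ 6 * p)) = 2 * k ^ 2 - 1 := by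
    rw [mul_neg, ← sub_eq_add_neg, one_sub_four_mul_squircularScale_pow_six_mul hp₀,
      Real.sqrt_sq (sub_nonneg.2 (one_le_two_mul_squircularScale_sq hp₂))]
  calc squircularScale (-(k ^ 6 * p)) = √(2 / (1 + (2 * k ^ 2 - 1))) := by
        rw [squircularScale, hroot]
    _ = √(k⁻¹ ^ 2) := by
        congr 1
        field_simp
        ring
    _ = k⁻¹ := Real.sqrt_sq (by positivity)

theorem sqrt_neg_one_add_sqrt_div {c : ℝ} (hc : c ≠ 0) {d : ℝ} (hcd : 0 ≤ 1 + 4 * (d ^ 2 * c)) :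
    √((-1 + √(1 + 4 * (d ^ 2 * c))) / (2 * c)) = squircularScale (d ^ 2 * c) * |d| := by
  have hroot : √(1 + 4 * (d ^ 2 * c)) ^ 2 = 1 + 4 * (d ^ 2 * c) := Real.sq_sqrt hcd
  have hpos : 0 < 1 + √(1 + 4 * (d ^ 2 * c)) := by positivity
  have hrationalised : (-1 + √(1 + 4 * (d ^ 2 * c))) / (2 * c) =
      2 / (1 + √(1 + 4 * (d ^ 2 * c))) * d ^ 2 := by
    generalize √(1 + 4 * (d ^ 2 * c)) = r at hroot hpos ⊢
    field_simp
    linear_combination hroot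
  rw [hrationalised, Real.sqrt_mul (by positivity), Real.sqrt_sq_eq_abs, squircularScale]

theorem sqrt_squareToDisc {x y : ℝ} (h : x ^ 2 + y ^ 2 ≠ 0) :
    √((-1 + √(1 + 4 * x ^ 2 * y ^ 2 * (x ^ 2 + y ^ 2))) / (2 * (x ^ 2 + y ^ 2))) =
      squircularScale (squircularForm x y) * |x * y| := by
  have hform : squircularForm x y = (x * y) ^ 2 * (x ^ 2 + y ^ 2) := by
    unfold squircularForm
    ring
  rw [hform, ← sqrt_neg_one_add_sqrt_div h (by positivity)]
  ring_nf

theorem sqrt_discToSquare {u v : ℝ} (h : u ^ 2 + v ^ 2 ≠ 0)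
    (hform_le : 0 ≤ 1 - 4 * squircularForm u v) :
    √((1 - √(1 - 4 * u ^ 2 * v ^ 2 * (u ^ 2 + v ^ 2))) / (2 * (u ^ 2 + v ^ 2))) =
      squircularScale (-squircularForm u v) * |u * v| := by
  have hform : -squircularForm u v = (u * v) ^ 2 * -(u ^ 2 + v ^ 2) := by
    unfold squircularForm
    ring
  rw [hform, ← sqrt_neg_one_add_sqrt_div (neg_ne_zero.2 h) (by linarith), mul_neg 2, div_neg,
    ← neg_div]
  ring_nf

theorem real_sign_mul_abs (a : ℝ) : Real.sign a * |a| = a := by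
  rcases lt_trichotomy a 0 with ha | rfl | ha
  · rw [Real.sign_of_neg ha, abs_of_neg ha, neg_mul_neg, one_mul]
  · rw [Real.sign_zero, zero_mul]
  · rw [Real.sign_of_pos ha, abs_of_pos ha, one_mul]

theorem real_sign_mul_div_right_mul_abs (a : ℝ) {b : ℝ} (hb : b ≠ 0) :
    Real.sign (a * b) / b * |a * b| = a := by
  rw [div_mul_eq_mul_div, real_sign_mul_abs, mul_div_cancel_right₀ a hb]

theorem real_sign_mul_div_left_mul_abs {a : ℝ} (ha : a ≠ 0) (b : ℝ) :
    Real.sign (a * b) / a * |a * b| = b := by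
  rw [mul_comm a b, real_sign_mul_div_right_mul_abs b ha]

theorem three_squircular_left_inverse_general
    (x y u v : ℝ) (hxy : squircularForm x y ≤ 2) (hx0 : x ≠ 0) (hy0 : y ≠ 0)
    (hu : u = Real.sign (x * y) / y *
      Real.sqrt ((-1 + Real.sqrt (1 + 4 * x ^ 2 * y ^ 2 * (x ^ 2 + y ^ 2))) /
        (2 * (x ^ 2 + y ^ 2))))
    (hv : v = Real.sign (x * y) / x *
      Real.sqrt ((-1 + Real.sqrt (1 + 4 * x ^ 2 * y ^ 2 * (x ^ 2 + y ^ 2))) /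
        (2 * (x ^ 2 + y ^ 2)))) :
    0 < u ^ 2 + v ^ 2 ∧
    1 - 4 * u ^ 2 * v ^ 2 * (u ^ 2 + v ^ 2) ≥ 0 ∧
    Real.sign (u * v) / v *
      Real.sqrt ((1 - Real.sqrt (1 - 4 * u ^ 2 * v ^ 2 * (u ^ 2 + v ^ 2))) /
        (2 * (u ^ 2 + v ^ 2))) = x ∧
    Real.sign (u * v) / u *
      Real.sqrt ((1 - Real.sqrt (1 - 4 * u ^ 2 * v ^ 2 * (u ^ 2 + v ^ 2))) /
        (2 * (u ^ 2 + v ^ 2))) = y := by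
  set k := squircularScale (squircularForm x y)
  have hk0 : k ≠ 0 := (squircularScale_pos _).ne'
  have hp : 0 ≤ 1 + 4 * squircularForm x y := by linarith [squircularForm_nonneg x y]
  rw [sqrt_squareToDisc (by positivity), mul_left_comm] at hu hv
  rw [real_sign_mul_div_right_mul_abs x hy0] at hu
  rw [real_sign_mul_div_left_mul_abs hx0 y] at hv
  have hu0 : u ≠ 0 := hu ▸ mul_ne_zero hk0 hx0
  have hv0 : v ≠ 0 := hv ▸ mul_ne_zero hk0 hy0
  have hform : squircularForm u v = k ^ 6 * squircularForm x y := by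
    rw [hu, hv, squircularForm_mul_mul]
  have hdiscrim : 0 ≤ 1 - 4 * squircularForm u v := by
    rw [hform, one_sub_four_mul_squircularScale_pow_six_mul hp]
    positivity
  have hscale : squircularScale (-squircularForm u v) = k⁻¹ := by
    rw [hform, squircularScale_neg_pow_six_mul hp hxy]
  rw [sqrt_discToSquare (by positivity) hdiscrim, hscale, mul_left_comm,
    mul_left_comm (_ / u), real_sign_mul_div_right_mul_abs u hv0,
    real_sign_mul_div_left_mul_abs hu0 v]
  exact ⟨by positivity, by simpa only [squircularForm, mul_assoc] using hdiscrim,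
    by rw [hu, inv_mul_cancel_left₀ hk0], by rw [hv, inv_mul_cancel_left₀ hk0]⟩

/-- The 3-Squircular disc-to-square formulas invert the 3-Squircular
square-to-disc map. -/
theorem three_squircular_left_inverse
    (x y u v : ℝ)
    (hx : x ∈ Set.Icc (-1 : ℝ) 1) (hy : y ∈ Set.Icc (-1 : ℝ) 1)
    (hx0 : x ≠ 0) (hy0 : y ≠ 0)
    (hu : u = Real.sign (x * y) / y *
      Real.sqrt ((-1 + Real.sqrt (1 + 4 * x ^ 2 * y ^ 2 * (x ^ 2 + y ^ 2))) /
        (2 * (x ^ 2 + y ^ 2))))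
    (hv : v = Real.sign (x * y) / x *
      Real.sqrt ((-1 + Real.sqrt (1 + 4 * x ^ 2 * y ^ 2 * (x ^ 2 + y ^ 2))) /
        (2 * (x ^ 2 + y ^ 2)))) :
    0 < u ^ 2 + v ^ 2 ∧
    1 - 4 * u ^ 2 * v ^ 2 * (u ^ 2 + v ^ 2) ≥ 0 ∧
    Real.sign (u * v) / v *
      Real.sqrt ((1 - Real.sqrt (1 - 4 * u ^ 2 * v ^ 2 * (u ^ 2 + v ^ 2))) /
        (2 * (u ^ 2 + v ^ 2))) = x ∧
    Real.sign (u * v) / u *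
      Real.sqrt ((1 - Real.sqrt (1 - 4 * u ^ 2 * v ^ 2 * (u ^ 2 + v ^ 2))) /
        (2 * (u ^ 2 + v ^ 2))) = y := by
  exact three_squircular_left_inverse_general x y u v (squircularForm_le_two hx hy) hx0 hy0 hu hv
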